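/- Let n, k ≥ 1 and define F : S_{2k} → ℝ by F(σ) = Σ_{p_1,…,p_{2k} ∈ {1,…,2n}} Δ_σ(p) Π_{r=1}^k J_{p_{2r−1}, p_{2r}}, where J = ((O, I_n), (−I_n, O)). Then: (1) F(ζσζ') = ε(ζ) F(σ) for all σ ∈ S_{2k} and ζ, ζ' ∈ H_k; (2) if some connected component of Γ(σ) has size not divisible by 4, then F(σ) = 0; in particular, (3) if k is odd then F is identically zero on S_{2k}. -/

import Mathlib

/-!
Part (1): a hyperoctahedral permutation permutes the pairs `{2r-1, 2r}` and possibly flips some of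
them, and its sign is `(-1)` to the number of flips (`IsHyper.exists_wreath`). A product over the
pairs of a symmetric function is therefore `H_k`-invariant (`DeltaO_mul_hyper`), while for the
antisymmetric `J` it picks up `ε(ζ)` (`prod_Jmat_comp_hyper`). Relabelling the summation variable by
`ζ` moves the left factor from `Δ` to the product of entries of `J`.

Part (2): the involution `i ↔ n + i` on indices (`conjIdx`) satisfies `J_{p', q'} = -J_{p, q}`.
Applied to the labels of one component `C` of `Γ(σ)` only, it preserves `Δ_σ`, since the edges
`{σ(2r-1), σ(2r)}` do not leave `C`, and it multiplies the product of entries of `J` by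
`(-1)^(|C|/2)`, since `C` is a union of pairs `{2r-1, 2r}`. If `4 ∤ |C|` the sum is equal to its
negative (`TDIII_eq_zero`).

Part (3): the component sizes add up to `2k`, so for odd `k` one of them is not divisible by `4`.
-/

/-!
Weingarten calculus for classical compact Lie groups and compact symmetric spaces
(S. Matsumoto, "Weingarten calculus for matrix ensembles associated with compact
symmetric spaces"): common definitions.

We index `{1,…,m}` by `Fin m` (0-indexed), so the pair `{2r-1, 2r}` becomes
`{2r, 2r+1}` for `r ∈ Fin k`.
-/

open MeasureTheory Finset Matrix

namespace WgPaper

/-- `lo r` is the (0-indexed) point `2r`, i.e. `2r - 1` in 1-indexed notation. -/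
def lo {k : ℕ} (i : Fin k) : Fin (2 * k) := ⟨2 * (i : ℕ), by have := i.isLt; omega⟩

/-- `hi r` is the (0-indexed) point `2r + 1`, i.e. `2r` in 1-indexed notation. -/
def hi {k : ℕ} (i : Fin k) : Fin (2 * k) := ⟨2 * (i : ℕ) + 1, by have := i.isLt; omega⟩

/-- Number of cycles of a permutation, counting fixed points as 1-cycles. -/
def cyc {m : ℕ} (σ : Equiv.Perm (Fin m)) : ℕ :=
  Multiset.card σ.cycleType + (Finset.univ.filter fun x => σ x = x).card

/-- Number of even-length cycles of a permutation. -/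
def evenCycles {m : ℕ} (σ : Equiv.Perm (Fin m)) : ℕ :=
  Multiset.card (σ.cycleType.filter fun d => d % 2 = 0)

/-- Number of odd-length cycles of a permutation, counting fixed points as 1-cycles. -/
def oddCycles {m : ℕ} (σ : Equiv.Perm (Fin m)) : ℕ :=
  Multiset.card (σ.cycleType.filter fun d => d % 2 = 1)
    + (Finset.univ.filter fun x => σ x = x).card

/-- The sign `ε(σ)` of a permutation, as an element of a commutative ring. -/
def sgn (R : Type*) [CommRing R] {m : ℕ} (σ : Equiv.Perm (Fin m)) : R :=
  ((Equiv.Perm.sign σ : ℤ) : R)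

/-- Full convolution on a finite group: `(f * g)(σ) = ∑_τ f(τ) g(τ⁻¹ σ)`. -/
def conv {G : Type*} [Group G] [Fintype G] {R : Type*} [CommRing R] (f g : G → R) : G → R :=
  fun σ => ∑ τ : G, f τ * g (τ⁻¹ * σ)

/-- The Dirac function at the identity permutation. -/
def deltaId {m : ℕ} {R : Type*} [CommRing R] : Equiv.Perm (Fin m) → R :=
  fun σ => if σ = 1 then 1 else 0

/-- The graph `Γ(σ)` on `{1,…,2k}` whose edges are `{2r-1, 2r}` and `{σ(2r-1), σ(2r)}`
(in 1-indexed notation) for `1 ≤ r ≤ k`. -/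
def Gamma {k : ℕ} (σ : Equiv.Perm (Fin (2 * k))) : SimpleGraph (Fin (2 * k)) :=
  SimpleGraph.fromRel fun a b =>
    (∃ r : Fin k, a = lo r ∧ b = hi r) ∨ ∃ r : Fin k, a = σ (lo r) ∧ b = σ (hi r)

/-- `c(σ)`, the number of connected components of `Γ(σ)`. -/
noncomputable def ccount {k : ℕ} (σ : Equiv.Perm (Fin (2 * k))) : ℕ :=
  Nat.card (Gamma σ).ConnectedComponent

/-- The number of vertices of a connected component of a graph. -/
noncomputable def compSize {V : Type*} {G : SimpleGraph V} (C : G.ConnectedComponent) : ℕ :=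
  Nat.card {v // G.connectedComponentMk v = C}

/-- `ℓe(σ)`: the number of connected components of `Γ(σ)` whose size is `≡ 0 (mod 4)`. -/
noncomputable def ecomp {k : ℕ} (σ : Equiv.Perm (Fin (2 * k))) : ℕ :=
  Nat.card {C : (Gamma σ).ConnectedComponent // compSize C % 4 = 0}

/-- `ℓo(σ)`: the number of connected components of `Γ(σ)` whose size is `≡ 2 (mod 4)`. -/
noncomputable def ocomp {k : ℕ} (σ : Equiv.Perm (Fin (2 * k))) : ℕ :=
  Nat.card {C : (Gamma σ).ConnectedComponent // compSize C % 4 = 2}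

/-- Membership in the hyperoctahedral subgroup `H_k ≤ S_{2k}`: each pair
`{2i-1, 2i}` is mapped onto some pair `{2j-1, 2j}`. -/
def IsHyper {k : ℕ} (ζ : Equiv.Perm (Fin (2 * k))) : Prop :=
  ∀ i : Fin k, ∃ j : Fin k, ({ζ (lo i), ζ (hi i)} : Finset (Fin (2 * k))) = {lo j, hi j}

/-- The defining property of the set `M_{2k}` of coset representatives of `S_{2k}/H_k`:
`σ(2i-1) < σ(2i)` for all `i` and `σ(1) < σ(3) < ⋯ < σ(2k-1)`. -/
def MProp {k : ℕ} (σ : Equiv.Perm (Fin (2 * k))) : Prop :=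
  (∀ i : Fin k, σ (lo i) < σ (hi i)) ∧ ∀ i j : Fin k, i < j → σ (lo i) < σ (lo j)

open scoped Classical in
/-- The set `M_{2k}` of coset representatives of `S_{2k}/H_k`, as a `Finset`. -/
noncomputable def Mset (k : ℕ) : Finset (Equiv.Perm (Fin (2 * k))) :=
  Finset.univ.filter MProp

/-- Reduced convolution: `(f ⋆ g)(σ) = ∑_{τ ∈ M_{2k}} f(τ) g(τ⁻¹ σ)`. -/
noncomputable def sconv {k : ℕ} {R : Type*} [CommRing R]
    (f g : Equiv.Perm (Fin (2 * k)) → R) : Equiv.Perm (Fin (2 * k)) → R :=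
  fun σ => ∑ τ ∈ Mset k, f τ * g (τ⁻¹ * σ)

open scoped Classical in
/-- The indicator function `1_k` of `H_k`. -/
noncomputable def oneH {k : ℕ} {R : Type*} [CommRing R] : Equiv.Perm (Fin (2 * k)) → R :=
  fun σ => if IsHyper σ then 1 else 0

open scoped Classical in
/-- The twisted indicator function `1_k^ε` of `H_k`: `σ ↦ ε(σ)` on `H_k`, `0` elsewhere. -/
noncomputable def oneHeps {k : ℕ} {R : Type*} [CommRing R] : Equiv.Perm (Fin (2 * k)) → R :=
  fun σ => if IsHyper σ then sgn R σ else 0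

/-- `δ_σ(i,j) = ∏_{s=1}^k δ_{i_{σ(s)}, j_s}`. -/
def deltaP {k : ℕ} {α : Type*} [DecidableEq α] {R : Type*} [CommRing R]
    (σ : Equiv.Perm (Fin k)) (i j : Fin k → α) : R :=
  ∏ s : Fin k, if i (σ s) = j s then 1 else 0

/-- `Δ_σ(i) = ∏_{s=1}^k δ_{i_{σ(2s-1)}, i_{σ(2s)}}`. -/
def DeltaO {k : ℕ} {α : Type*} [DecidableEq α] {R : Type*} [CommRing R]
    (σ : Equiv.Perm (Fin (2 * k))) (i : Fin (2 * k) → α) : R :=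
  ∏ s : Fin k, if i (σ (lo s)) = i (σ (hi s)) then 1 else 0

/-- The standard skew-symmetric matrix `J_n = ((O, I_n), (−I_n, O))`. -/
def Jmat (R : Type*) [CommRing R] (n : ℕ) : Matrix (Fin (2 * n)) (Fin (2 * n)) R :=
  Matrix.of fun p q =>
    if (p : ℕ) + n = (q : ℕ) then 1 else if (q : ℕ) + n = (p : ℕ) then -1 else 0

/-- `Δ'_σ(i) = ∏_{r=1}^k ⟨i_{σ(2r-1)}, i_{σ(2r)}⟩`, where `⟨p,q⟩` is the `(p,q)` entry
of `J_n`. -/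
def DeltaSp {k n : ℕ} (R : Type*) [CommRing R]
    (σ : Equiv.Perm (Fin (2 * k))) (i : Fin (2 * k) → Fin (2 * n)) : R :=
  ∏ s : Fin k, Jmat R n (i (σ (lo s))) (i (σ (hi s)))

/-- The signature matrix `I'_{a,n-a} = diag(I_a, −I_{n-a})`, of size `n`. -/
def Iab (R : Type*) [CommRing R] (n a : ℕ) : Matrix (Fin n) (Fin n) R :=
  Matrix.of fun p q => if p = q then (if (p : ℕ) < a then 1 else -1) else 0

/-- The signature matrix `I''_{a,n-a} = diag(I_a, −I_{n-a}, I_a, −I_{n-a})`, of size `2n`. -/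
def Ippab (R : Type*) [CommRing R] (n a : ℕ) : Matrix (Fin (2 * n)) (Fin (2 * n)) R :=
  Matrix.of fun p q => if p = q then (if (p : ℕ) % n < a then 1 else -1) else 0

/-- The unitary group `U(n)` of `n × n` complex unitary matrices. -/
abbrev UG (n : ℕ) := Matrix.unitaryGroup (Fin n) ℂ

/-- The real orthogonal group `O(n)`. -/
abbrev OG (n : ℕ) := Matrix.orthogonalGroup (Fin n) ℝ

noncomputable instance (n : ℕ) : MeasurableSpace (UG n) := borel _

noncomputable instance (n : ℕ) : MeasurableSpace (OG n) := borel _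

/-- A `2n × 2n` unitary matrix lies in the compact symplectic group `Sp(2n)`
iff `S J Sᵀ = J`. -/
def IsSymplectic {n : ℕ} (S : UG (2 * n)) : Prop :=
  (S : Matrix (Fin (2 * n)) (Fin (2 * n)) ℂ) * Jmat ℂ n
    * (S : Matrix (Fin (2 * n)) (Fin (2 * n)) ℂ)ᵀ = Jmat ℂ n

/-- The function `T^{D III}_n` on `S_{2k}`:
`σ ↦ ∑_p Δ_σ(p) ∏_{r=1}^k J_{p_{2r-1}, p_{2r}}`. -/
noncomputable def TDIII (n k : ℕ) : Equiv.Perm (Fin (2 * k)) → ℝ :=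
  fun σ => ∑ p : Fin (2 * k) → Fin (2 * n),
    DeltaO σ p * ∏ r : Fin k, Jmat ℝ n (p (lo r)) (p (hi r))

/-- The function `T^{C I}_n` on `S_{2k}`:
`σ ↦ ∑_p Δ'_σ(p) ∏_{r=1}^k (J I'_{nn})_{p_{2r-1}, p_{2r}}`. -/
noncomputable def TCI (n k : ℕ) : Equiv.Perm (Fin (2 * k)) → ℂ :=
  fun σ => ∑ p : Fin (2 * k) → Fin (2 * n),
    DeltaSp ℂ σ p * ∏ r : Fin k, (Jmat ℂ n * Iab ℂ (2 * n) n) (p (lo r)) (p (hi r))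

/-- The identification of `{1,…,k} × {1,2}` with `{1,…,2k}` sending `(i, 0)` to `lo i` and
`(i, 1)` to `hi i`. -/
def pairEquiv (k : ℕ) : Fin k × Fin 2 ≃ Fin (2 * k) :=
  finProdFinEquiv.trans (finCongr (mul_comm k 2))

lemma pairEquiv_zero {k : ℕ} (i : Fin k) : pairEquiv k (i, 0) = lo i := by
  ext; simp [pairEquiv, lo]

lemma pairEquiv_one {k : ℕ} (i : Fin k) : pairEquiv k (i, 1) = hi i := by
  ext; simp [pairEquiv, hi]; omega

/-- The wreath product structure of `H_k`: a hyperoctahedral permutation permutes the `k` pairs by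
some `τ` and acts inside the pairs by some `f i`. Permuting the pairs is even, because it acts as
`τ` both on the lower and on the upper points, so the sign only sees the `f i`. -/
lemma IsHyper.exists_wreath {k : ℕ} {ζ : Equiv.Perm (Fin (2 * k))} (h : IsHyper ζ) :
    ∃ (τ : Equiv.Perm (Fin k)) (f : Fin k → Equiv.Perm (Fin 2)),
      (∀ i c, ζ (pairEquiv k (i, c)) = pairEquiv k (τ i, f i c)) ∧
      Equiv.Perm.sign ζ = ∏ i, Equiv.Perm.sign (f i) := by
  have key : ∀ i : Fin k, ∃ (j : Fin k) (f : Equiv.Perm (Fin 2)),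
      ∀ c, ζ (pairEquiv k (i, c)) = pairEquiv k (j, f c) := by
    intro i
    obtain ⟨j, hj⟩ := h i
    have hne : ζ (lo i) ≠ ζ (hi i) := by
      intro hc
      have := congrArg Fin.val (ζ.injective hc)
      simp [lo, hi] at this
    have hlo : ζ (lo i) ∈ ({lo j, hi j} : Finset (Fin (2 * k))) := by simp [← hj]
    have hhi : ζ (hi i) ∈ ({lo j, hi j} : Finset (Fin (2 * k))) := by simp [← hj]
    simp only [Finset.mem_insert, Finset.mem_singleton] at hlo hhi
    rcases hlo with hlo | hlo
    · have hhi' : ζ (hi i) = hi j := hhi.resolve_left fun hc => hne (hlo.trans hc.symm)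
      refine ⟨j, 1, fun c => ?_⟩
      fin_cases c
      · simpa [pairEquiv_zero] using hlo
      · simpa [pairEquiv_one] using hhi'
    · have hhi' : ζ (hi i) = lo j := hhi.resolve_right fun hc => hne (hlo.trans hc.symm)
      refine ⟨j, Equiv.swap 0 1, fun c => ?_⟩
      fin_cases c
      · simpa [pairEquiv_zero, pairEquiv_one] using hlo
      · simpa [pairEquiv_zero, pairEquiv_one] using hhi'
  choose j f hf using key
  have hinj : Function.Injective j := by
    intro a b hab
    have h1 := hf a ((f a).symm 0)
    have h2 := hf b ((f b).symm 0)
    rw [Equiv.apply_symm_apply] at h1 h2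
    rw [hab, ← h2] at h1
    exact congrArg Prod.fst ((pairEquiv k).injective (ζ.injective h1))
  let τ : Equiv.Perm (Fin k) := Equiv.ofBijective j (Finite.injective_iff_bijective.mp hinj)
  refine ⟨τ, f, hf, ?_⟩
  have hζ : ζ = (pairEquiv k).permCongr
      ((Equiv.prodCongrLeft fun _ : Fin 2 => τ) * Equiv.prodCongrRight f) := by
    ext1 x
    obtain ⟨⟨i, c⟩, rfl⟩ := (pairEquiv k).surjective x
    rw [hf]
    simp [Equiv.permCongr_apply, Equiv.prodCongrLeft, Equiv.prodCongrRight, τ]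
  rw [hζ, Equiv.Perm.sign_permCongr, map_mul, Equiv.Perm.sign_prodCongrLeft,
    Equiv.Perm.sign_prodCongrRight]
  simp

lemma perm_fin_two (f : Equiv.Perm (Fin 2)) : f = 1 ∨ f = Equiv.swap 0 1 := by
  decide +revert

lemma DeltaO_mul_hyper {k : ℕ} {α : Type*} [DecidableEq α] {R : Type*} [CommRing R]
    (σ : Equiv.Perm (Fin (2 * k))) {ζ : Equiv.Perm (Fin (2 * k))} (h : IsHyper ζ)
    (p : Fin (2 * k) → α) : (DeltaO (σ * ζ) p : R) = DeltaO σ p := by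
  obtain ⟨τ, f, hf, -⟩ := h.exists_wreath
  unfold DeltaO
  rw [← Equiv.prod_comp τ (fun s => if p (σ (lo s)) = p (σ (hi s)) then (1 : R) else 0)]
  refine Finset.prod_congr rfl fun i _ => ?_
  rw [Equiv.Perm.mul_apply, Equiv.Perm.mul_apply, ← pairEquiv_zero i, ← pairEquiv_one i, hf, hf,
    ← pairEquiv_zero (τ i), ← pairEquiv_one (τ i)]
  rcases perm_fin_two (f i) with hi | hi
  · simp [hi]
  · simp [hi, eq_comm]

lemma Jmat_swap {n : ℕ} (p q : Fin (2 * n)) : Jmat ℝ n q p = -Jmat ℝ n p q := by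
  have := p.isLt
  simp only [Jmat, Matrix.of_apply]
  split_ifs <;> first | omega | norm_num

lemma prod_Jmat_comp_hyper {n k : ℕ} {ζ : Equiv.Perm (Fin (2 * k))} (h : IsHyper ζ)
    (p : Fin (2 * k) → Fin (2 * n)) :
    ∏ r : Fin k, Jmat ℝ n (p (ζ (lo r))) (p (ζ (hi r))) =
      sgn ℝ ζ * ∏ r : Fin k, Jmat ℝ n (p (lo r)) (p (hi r)) := by
  obtain ⟨τ, f, hf, hs⟩ := h.exists_wreath
  rw [← Equiv.prod_comp τ (fun r => Jmat ℝ n (p (lo r)) (p (hi r))), sgn, hs]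
  push_cast
  rw [← Finset.prod_mul_distrib]
  refine Finset.prod_congr rfl fun i _ => ?_
  rw [← pairEquiv_zero i, ← pairEquiv_one i, hf, hf, ← pairEquiv_zero (τ i),
    ← pairEquiv_one (τ i)]
  rcases perm_fin_two (f i) with hi | hi
  · simp [hi]
  · simp [hi, ← Jmat_swap]

lemma TDIII_hyper {n k : ℕ} (σ ζ ζ' : Equiv.Perm (Fin (2 * k))) (h : IsHyper ζ)
    (h' : IsHyper ζ') : TDIII n k (ζ * σ * ζ') = sgn ℝ ζ * TDIII n k σ := by
  have hsq : sgn ℝ ζ * sgn ℝ ζ = 1 := by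
    unfold sgn
    rw [← Int.cast_mul, ← Units.val_mul, Int.units_mul_self]
    simp
  unfold TDIII
  rw [Finset.mul_sum]
  conv_rhs => rw [← Equiv.sum_comp (Equiv.arrowCongr ζ.symm (Equiv.refl (Fin (2 * n))))]
  refine Finset.sum_congr rfl fun p _ => ?_
  have hD : (DeltaO σ (Equiv.arrowCongr ζ.symm (Equiv.refl (Fin (2 * n))) p) : ℝ)
      = DeltaO (ζ * σ) p := by
    unfold DeltaO
    rfl
  have hJ : ∏ r : Fin k, Jmat ℝ n (Equiv.arrowCongr ζ.symm (Equiv.refl (Fin (2 * n))) p (lo r))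
        (Equiv.arrowCongr ζ.symm (Equiv.refl (Fin (2 * n))) p (hi r))
      = sgn ℝ ζ * ∏ r : Fin k, Jmat ℝ n (p (lo r)) (p (hi r)) := by
    rw [← prod_Jmat_comp_hyper h]
    simp [Equiv.arrowCongr]
  rw [hD, hJ, DeltaO_mul_hyper _ h', mul_left_comm, ← mul_assoc (sgn ℝ ζ), hsq, one_mul]

/-- The involution of `{1,…,2n}` exchanging `i` and `n + i`, i.e. the permutation underlying the
signed permutation matrix `J_n`. -/
def conjIdx {n : ℕ} (p : Fin (2 * n)) : Fin (2 * n) :=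
  if h : (p : ℕ) < n then ⟨p + n, by omega⟩ else ⟨p - n, by omega⟩

lemma conjIdx_conjIdx {n : ℕ} (p : Fin (2 * n)) : conjIdx (conjIdx p) = p := by
  have := p.isLt
  by_cases h : (p : ℕ) < n
  · ext; simp [conjIdx, h]
  · have h' : (p : ℕ) - n < n := by omega
    ext; simp [conjIdx, h, h']; omega

lemma Jmat_conjIdx {n : ℕ} (p q : Fin (2 * n)) :
    Jmat ℝ n (conjIdx p) (conjIdx q) = -Jmat ℝ n p q := by
  have := p.isLt
  have := q.isLt
  simp only [Jmat, Matrix.of_apply, conjIdx]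
  split_ifs <;> simp_all <;> omega

lemma Gamma_mk_lo {k : ℕ} (σ : Equiv.Perm (Fin (2 * k))) (r : Fin k) :
    (Gamma σ).connectedComponentMk (lo r) = (Gamma σ).connectedComponentMk (hi r) := by
  refine SimpleGraph.ConnectedComponent.sound (SimpleGraph.Adj.reachable ?_)
  rw [Gamma, SimpleGraph.fromRel_adj]
  exact ⟨by simp [lo, hi], Or.inl (Or.inl ⟨r, rfl, rfl⟩)⟩

lemma Gamma_mk_perm_lo {k : ℕ} (σ : Equiv.Perm (Fin (2 * k))) (r : Fin k) :
    (Gamma σ).connectedComponentMk (σ (lo r)) = (Gamma σ).connectedComponentMk (σ (hi r)) := by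
  refine SimpleGraph.ConnectedComponent.sound (SimpleGraph.Adj.reachable ?_)
  rw [Gamma, SimpleGraph.fromRel_adj]
  exact ⟨by simp [lo, hi], Or.inl (Or.inr ⟨r, rfl, rfl⟩)⟩

open scoped Classical in
/-- A component is a union of pairs `{lo r, hi r}`. -/
lemma compSize_eq {k : ℕ} (σ : Equiv.Perm (Fin (2 * k))) (C : (Gamma σ).ConnectedComponent) :
    compSize C =
      2 * (Finset.univ.filter fun r : Fin k => (Gamma σ).connectedComponentMk (lo r) = C).card := by
  unfold compSize
  rw [Nat.card_eq_fintype_card, Fintype.card_subtype, Finset.card_filter, Finset.card_filter,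
    ← Equiv.sum_comp (pairEquiv k), Fintype.sum_prod_type, Finset.mul_sum]
  refine Finset.sum_congr rfl fun r _ => ?_
  rw [Fin.sum_univ_two, pairEquiv_zero, pairEquiv_one, ← Gamma_mk_lo]
  ring

open scoped Classical in
/-- Applying `conjIdx` to the labels of a single component `C` preserves `Δ_σ` and changes the sign
of each factor of `∏ J` coming from `C`; there are `|C| / 2` of those, so the sum equals its own
negative when `|C| / 2` is odd. -/
lemma TDIII_eq_zero {n k : ℕ} (σ : Equiv.Perm (Fin (2 * k)))
    (C : (Gamma σ).ConnectedComponent) (hC : ¬ 4 ∣ compSize C) : TDIII n k σ = 0 := by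
  let φ : (Fin (2 * k) → Fin (2 * n)) → Fin (2 * k) → Fin (2 * n) := fun p v =>
    if (Gamma σ).connectedComponentMk v = C then conjIdx (p v) else p v
  have hφ : Function.Involutive φ := by
    intro p
    funext v
    by_cases hv : (Gamma σ).connectedComponentMk v = C <;> simp [φ, hv, conjIdx_conjIdx]
  have hodd : Odd (Finset.univ.filter fun r : Fin k =>
      (Gamma σ).connectedComponentMk (lo r) = C).card := by
    rw [compSize_eq] at hC
    rw [← Nat.not_even_iff_odd]
    rintro ⟨m, hm⟩
    exact hC ⟨m, by omega⟩
  have hconj : ∀ a b : Fin (2 * n), conjIdx a = conjIdx b ↔ a = b := fun a b =>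
    (Function.LeftInverse.injective (conjIdx_conjIdx (n := n))).eq_iff
  have hneg : TDIII n k σ = -TDIII n k σ := by
    unfold TDIII
    rw [← Finset.sum_neg_distrib]
    conv_lhs => rw [← Equiv.sum_comp hφ.toPerm]
    refine Finset.sum_congr rfl fun p _ => ?_
    rw [Function.Involutive.coe_toPerm]
    have hD : (DeltaO σ (φ p) : ℝ) = DeltaO σ p := by
      unfold DeltaO
      refine Finset.prod_congr rfl fun r _ => ?_
      simp only [φ, ← Gamma_mk_perm_lo σ r]
      by_cases hv : (Gamma σ).connectedComponentMk (σ (lo r)) = C <;> simp [hv, hconj]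
    have hJ : ∏ r : Fin k, Jmat ℝ n (φ p (lo r)) (φ p (hi r))
        = -∏ r : Fin k, Jmat ℝ n (p (lo r)) (p (hi r)) := by
      have : ∀ r : Fin k, Jmat ℝ n (φ p (lo r)) (φ p (hi r)) =
          (if (Gamma σ).connectedComponentMk (lo r) = C then -1 else 1) *
            Jmat ℝ n (p (lo r)) (p (hi r)) := by
        intro r
        simp only [φ, ← Gamma_mk_lo σ r]
        by_cases hv : (Gamma σ).connectedComponentMk (lo r) = C <;> simp [hv, Jmat_conjIdx]
      simp_rw [this]
      rw [Finset.prod_mul_distrib, ← Finset.prod_filter, Finset.prod_const, hodd.neg_one_pow,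
        neg_one_mul]
    rw [hD, hJ, mul_neg]
  linarith

lemma exists_not_four_dvd {k : ℕ} (hk : Odd k) (σ : Equiv.Perm (Fin (2 * k))) :
    ∃ C : (Gamma σ).ConnectedComponent, ¬ 4 ∣ compSize C := by
  classical
  by_contra! h
  have hsum : 2 * k = ∑ C : (Gamma σ).ConnectedComponent, compSize C := by
    have := Finset.card_eq_sum_card_fiberwise (s := Finset.univ) (t := Finset.univ)
      (f := (Gamma σ).connectedComponentMk) (fun _ _ => Finset.mem_coe.2 (Finset.mem_univ _))
    rw [Finset.card_univ, Fintype.card_fin] at this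
    refine this.trans (Finset.sum_congr rfl fun C _ => ?_)
    rw [compSize, Nat.card_eq_fintype_card, Fintype.card_subtype]
  have hd : 4 ∣ 2 * k := hsum ▸ Finset.dvd_sum fun C _ => h C
  obtain ⟨m, hm⟩ := hk
  omega

/-- properties of `T^{D III}_n`. -/
theorem stmt18 (n k : ℕ) (hn : 1 ≤ n) (hk : 1 ≤ k) :
    (∀ (σ ζ ζ' : Equiv.Perm (Fin (2 * k))), IsHyper ζ → IsHyper ζ' →
      TDIII n k (ζ * σ * ζ') = sgn ℝ ζ * TDIII n k σ) ∧
    (∀ σ : Equiv.Perm (Fin (2 * k)),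
      (∃ C : (Gamma σ).ConnectedComponent, ¬ (4 ∣ compSize C)) → TDIII n k σ = 0) ∧
    (Odd k → ∀ σ : Equiv.Perm (Fin (2 * k)), TDIII n k σ = 0) := by
  refine ⟨fun σ ζ ζ' h h' => TDIII_hyper σ ζ ζ' h h', fun σ ⟨C, hC⟩ => TDIII_eq_zero σ C hC,
    fun hodd σ => ?_⟩
  obtain ⟨C, hC⟩ := exists_not_four_dvd hodd σ
  exact TDIII_eq_zero σ C hC

end WgPaper
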